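/- arXiv:2004.14715 — 5 statements merged into one kernel-verified Lean document; each statement's English description precedes it below -/
import Mathlib

section
/- For every real number α > 1 and every q ∈ [0,1], the maximum of the two ratios (1+α)/(q·α + (1−q)·(1+α)) and 2α/(q·2α + (1−q)·(1+α)) is at least (α² + 2α − 1)/(α² + α). -/
theorem stmt_0 (α q : ℝ) (hα : 1 < α) (hq0 : 0 ≤ q) (hq1 : q ≤ 1) :
    (α ^ 2 + 2 * α - 1) / (α ^ 2 + α) ≤
      max ((1 + α) / (q * α + (1 - q) * (1 + α)))
          ((2 * α) / (q * (2 * α) + (1 - q) * (1 + α))) := by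
  have h0 : 0 < α ^ 2 + α := by positivity
  have h1 : 0 < q * α + (1 - q) * (1 + α) := by nlinarith
  have h2 : 0 < q * (2 * α) + (1 - q) * (1 + α) := by nlinarith
  rcases le_total (α ^ 2 - 1) (q * (α ^ 2 + 2 * α - 1)) with h | h
  · apply le_max_of_le_left
    rw [div_le_div_iff₀ h0 h1]
    linarith
  · apply le_max_of_le_right
    rw [div_le_div_iff₀ h0 h2]
    have := mul_le_mul_of_nonneg_right h (sub_nonneg.2 hα.le)
    linarith
end

section
/- For every real number α ≥ 1 and all nonnegative real numbers h, h*, ℓ, d satisfying d + h* ≤ h, the inequality ((α² − 1)/(α² + α))·(h·α + h*·α + ℓ) + ((2α)/(α² + α))·(h·α + h* + ℓ + d) ≥ h·α + h*·α + ℓ + d holds. -/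
theorem stmt_5 (α h hstar ℓ d : ℝ) (hα : 1 ≤ α)
    (hh : 0 ≤ h) (hhstar : 0 ≤ hstar) (hℓ : 0 ≤ ℓ) (hd : 0 ≤ d)
    (hclaim : d + hstar ≤ h) :
    ((α ^ 2 - 1) / (α ^ 2 + α)) * (h * α + hstar * α + ℓ) +
      ((2 * α) / (α ^ 2 + α)) * (h * α + hstar + ℓ + d) ≥
      h * α + hstar * α + ℓ + d := by
  have hpos : 0 < α ^ 2 + α := by nlinarith
  have h1 : 0 ≤ α * (α - 1) * (h - hstar - d) :=
    mul_nonneg (mul_nonneg (by linarith) (by linarith)) (by linarith)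
  have h2 : 0 ≤ (α - 1) * ℓ := mul_nonneg (by linarith) hℓ
  rw [ge_iff_le, div_mul_eq_mul_div, div_mul_eq_mul_div, ← add_div, le_div_iff₀ hpos]
  linarith
end

section
/- For every real number α ≥ 1 and all nonnegative real numbers h, h*, ℓ, d satisfying d + h* ≤ h, setting p = (α² − 1)/(α² + 2α − 1) and R = (α² + 2α − 1)/(α² + α), one has R·( p·(h*·α + h·α + ℓ) + (1 − p)·(h·α + ℓ + h* + d) ) ≥ h*·α + h·α + ℓ + d. -/
theorem stmt_6 (α h hstar ℓ d : ℝ) (hα : 1 ≤ α)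
    (hh : 0 ≤ h) (hhstar : 0 ≤ hstar) (hℓ : 0 ≤ ℓ) (hd : 0 ≤ d)
    (hclaim : d + hstar ≤ h) :
    let p := (α ^ 2 - 1) / (α ^ 2 + 2 * α - 1)
    let R := (α ^ 2 + 2 * α - 1) / (α ^ 2 + α)
    R * (p * (hstar * α + h * α + ℓ) + (1 - p) * (h * α + ℓ + hstar + d)) ≥
      hstar * α + h * α + ℓ + d := by
  intro p R
  have h1 : 0 < α ^ 2 + 2 * α - 1 := by nlinarith
  have h2 : 0 < α ^ 2 + α := by nlinarith
  have key : R * (p * (hstar * α + h * α + ℓ) + (1 - p) * (h * α + ℓ + hstar + d))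
      = ((α ^ 2 - 1) * (hstar * α + h * α + ℓ) + 2 * α * (h * α + ℓ + hstar + d))
        / (α ^ 2 + α) := by
    have hRp : R * p = (α ^ 2 - 1) / (α ^ 2 + α) := by
      simp only [R, p]
      rw [div_mul_div_comm, mul_comm (α ^ 2 + α), mul_div_mul_left _ _ h1.ne']
    have hR : R = (α ^ 2 - 1) / (α ^ 2 + α) + 2 * α / (α ^ 2 + α) := by
      simp only [R]
      rw [← add_div]
      ring
    calc _ = (R * p) * (hstar * α + h * α + ℓ) + (R - R * p) * (h * α + ℓ + hstar + d) := by ring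
      _ = _ := by
        rw [hRp, hR]
        ring
  rw [key, ge_iff_le, le_div_iff₀ h2]
  have e1 : 0 ≤ α * (α - 1) * (h - hstar - d) :=
    mul_nonneg (mul_nonneg (by linarith) (by linarith)) (by linarith)
  have e2 : 0 ≤ (α - 1) * ℓ := mul_nonneg (by linarith) hℓ
  linarith
end

section
/- For every real number α > 1, the strict inequality min(1, log α) > (α² − 1)/(α² + 2α − 1) holds, where log denotes the natural logarithm. -/
theorem stmt_12 (α : ℝ) (hα : 1 < α) :
    min 1 (Real.log α) > (α ^ 2 - 1) / (α ^ 2 + 2 * α - 1) := by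
  have h0 : 0 < α := by linarith
  have hd : 0 < α ^ 2 + 2 * α - 1 := by nlinarith
  have h := Real.one_sub_inv_le_log_of_pos h0
  have key : (α ^ 2 - 1) / (α ^ 2 + 2 * α - 1) < 1 - α⁻¹ := by
    have e : 1 - α⁻¹ = (α - 1) / α := by field_simp
    rw [e, div_lt_div_iff₀ hd h0]
    nlinarith [mul_pos (sub_pos.2 hα) (sub_pos.2 hα)]
  have hi : 0 < α⁻¹ := inv_pos.2 h0
  exact lt_min (by linarith) (by linarith)
end

section
/- Let J be a finite set of jobs and d : J → ℕ assign to each job a deadline with d(j) ≥ 1 for all j ∈ J. Then there exists an injective function σ : J → ℕ with σ(j) < d(j) for every j ∈ J if and only if for every t ∈ ℕ, the number of jobs j ∈ J with d(j) ≤ t is at most t. -/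
theorem stmt_13 {J : Type*} [Fintype J] (d : J → ℕ) (hd : ∀ j, 1 ≤ d j) :
    (∃ σ : J → ℕ, Function.Injective σ ∧ ∀ j, σ j < d j) ↔
      ∀ t : ℕ, (Finset.univ.filter (fun j => d j ≤ t)).card ≤ t := by
  constructor
  · rintro ⟨σ, hσ, hlt⟩ t
    have h := Finset.card_le_card_of_injOn (s := Finset.univ.filter (fun j => d j ≤ t))
      (t := Finset.range t) σ (by
        intro j hj
        have hj' : d j ≤ t := by simpa using hj
        have := hlt j
        simp only [Finset.coe_range, Set.mem_Iio]
        omega) hσ.injOn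
    simpa using h
  · intro h
    have key := (Finset.all_card_le_biUnion_card_iff_exists_injective
      (fun j => Finset.range (d j))).1 (by
        intro s
        rcases s.eq_empty_or_nonempty with rfl | hs
        · simp
        obtain ⟨m, hm, hmax⟩ := s.exists_max_image d hs
        calc s.card ≤ (Finset.univ.filter (fun j => d j ≤ d m)).card :=
              Finset.card_le_card (fun j hj => by simpa using hmax j hj)
          _ ≤ d m := h _
          _ = (Finset.range (d m)).card := (Finset.card_range _).symm
          _ ≤ _ := Finset.card_le_card
              (Finset.subset_biUnion_of_mem (fun j => Finset.range (d j)) hm))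
    obtain ⟨σ, hσ, hm⟩ := key
    exact ⟨σ, hσ, fun j => by simpa using hm j⟩
end
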